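/- Let F be a formal group law over a commutative ring R with associated unit q(x,y) and p = q⁻¹. Fix n ≥ 2 and a root α = (i,j), 1 ≤ i < j ≤ n, and let A_α be the generalized divided difference operator on R⟦x₁,…,x_n⟧, i.e., A_α(f) is the unique power series with (x_i − x_j)·A_α(f) = p(x_i,x_j)·f − r_α(p(x_i,x_j)·f), where r_α exchanges x_i and x_j. Then the kernel of A_α is exactly q(x_i,x_j)·R⟦x₁,…,x_n⟧^{r_α}: it is a free module of rank one over the subring of r_α-invariant power series, generated by the unit q(x_i,x_j). -/

import Mathlib

noncomputable section
open MvPowerSeries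

variable {k : Type*} [CommRing k]

/-- Substitution of a family of power series (each with zero constant term) into a
multivariate power series, via the standard coefficient formula. -/
def psSubst {σ τ : Type*} [Fintype σ] [DecidableEq σ]
    (a : σ → MvPowerSeries τ k) (f : MvPowerSeries σ k) : MvPowerSeries τ k :=
  fun e => ∑ d ∈ Finset.Iic (Finsupp.equivFunOnFinite.symm fun _ : σ => e.sum fun _ m => m),
    (MvPowerSeries.coeff d f) * MvPowerSeries.coeff e (∏ i, a i ^ d i)

/-- The automorphism of `k⟦x,y⟧` exchanging the two variables. -/
def swapPS (f : MvPowerSeries (Fin 2) k) : MvPowerSeries (Fin 2) k :=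
  fun d => MvPowerSeries.coeff (Finsupp.equivMapDomain (Equiv.swap 0 1) d) f

/-- A formal group law over `k`. -/
def IsFormalGroupLaw (F : MvPowerSeries (Fin 2) k) : Prop :=
  swapPS F = F ∧
  psSubst ![X 0, 0] F = (X 0 : MvPowerSeries (Fin 2) k) ∧
  psSubst ![0, X 1] F = (X 1 : MvPowerSeries (Fin 2) k) ∧
  psSubst ![psSubst ![(X 0 : MvPowerSeries (Fin 3) k), X 1] F, X 2] F =
    psSubst ![(X 0 : MvPowerSeries (Fin 3) k), psSubst ![(X 1 : MvPowerSeries (Fin 3) k), X 2] F] F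

/-- The formal difference `x [-1] y = F(x, ι(y)) ∈ k⟦x,y⟧`, where `ι` is the formal inverse. -/
def formalDiff (F : MvPowerSeries (Fin 2) k) (ι : PowerSeries k) : MvPowerSeries (Fin 2) k :=
  psSubst ![X 0, psSubst (fun _ : Unit => (X 1 : MvPowerSeries (Fin 2) k)) ι] F


/-- The automorphism of `k⟦x₁,…⟧` induced by a permutation of the variables. -/
def renamePS {σ : Type*} (e : Equiv.Perm σ) (f : MvPowerSeries σ k) : MvPowerSeries σ k :=
  fun d => MvPowerSeries.coeff (Finsupp.equivMapDomain e d) f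

/-!
A power series `f` satisfies `A_α(f) = 0` exactly when `p(x_i,x_j) f` is fixed by `r_α`, because
`x_i - x_j` is not a zero divisor. Since `p(x_i,x_j)` and `q(x_i,x_j)` are inverse to each other,
`h = p(x_i,x_j) f` is the only solution of `f = q(x_i,x_j) h`.
-/

section Substitution

variable {σ τ : Type*}

theorem coeff_prod_pow_eq_zero_of_degree_lt [Fintype σ] {a : σ → MvPowerSeries τ k}
    (ha : ∀ s, constantCoeff (a s) = 0) {d : σ →₀ ℕ} {e : τ →₀ ℕ} {s : σ} (hs : e.degree < d s) :
    coeff e (∏ t, a t ^ d t) = 0 := by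
  refine coeff_of_lt_order ?_
  calc (e.degree : ℕ∞) < d s := mod_cast hs
    _ ≤ (a s ^ d s).order := le_order_pow_of_constantCoeff_eq_zero _ (ha s)
    _ ≤ ∑ t, (a t ^ d t).order :=
      Finset.single_le_sum (f := fun t => (a t ^ d t).order) (fun _ _ => zero_le)
        (Finset.mem_univ s)
    _ ≤ (∏ t, a t ^ d t).order := le_order_prod _ _

variable [Fintype σ] [DecidableEq σ] {a : σ → MvPowerSeries τ k}

theorem psSubst_eq_subst (ha : ∀ s, constantCoeff (a s) = 0) (f : MvPowerSeries σ k) :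
    psSubst a f = subst a f := by
  ext e
  have hprod (d : σ →₀ ℕ) : (d.prod fun s m => a s ^ m) = ∏ s, a s ^ d s :=
    Finsupp.prod_fintype _ _ fun _ => pow_zero _
  simp only [coeff_subst (hasSubst_of_constantCoeff_zero ha), hprod, smul_eq_mul]
  refine (finsum_eq_sum_of_support_subset _ fun d hd => ?_).symm
  refine Finset.mem_coe.mpr (Finset.mem_Iic.mpr fun s => ?_)
  by_contra! hs
  exact hd (by simp only [coeff_prod_pow_eq_zero_of_degree_lt ha hs, mul_zero])

theorem psSubst_one (ha : ∀ s, constantCoeff (a s) = 0) :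
    psSubst a (1 : MvPowerSeries σ k) = 1 := by
  rw [psSubst_eq_subst ha, ← substAlgHom_apply (hasSubst_of_constantCoeff_zero ha), map_one]

theorem psSubst_mul (ha : ∀ s, constantCoeff (a s) = 0) (f g : MvPowerSeries σ k) :
    psSubst a (f * g) = psSubst a f * psSubst a g := by
  simp only [psSubst_eq_subst ha, subst_mul (hasSubst_of_constantCoeff_zero ha)]

end Substitution

theorem isRegular_X_sub_X {σ : Type*} {i j : σ} (hij : i ≠ j) :
    IsRegular (X i - X j : MvPowerSeries σ k) := by
  rw [isRegular_iff_mem_nonZeroDivisors, mem_nonZeroDivisors_iff_left]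
  intro g hg
  ext e
  -- `X j ^ m` has too high a degree in `X j` to divide a monomial with exponent `e j` there.
  set m := e j + 1
  have hpow : X i ^ m * g = X j ^ m * g := by
    obtain ⟨c, hc⟩ := sub_dvd_pow_sub_pow (X i : MvPowerSeries σ k) (X j) m
    linear_combination g * hc + c * hg
  calc coeff e g = coeff (Finsupp.single i m + e) (X i ^ m * g) := by
        rw [X_pow_eq, coeff_add_monomial_mul, one_mul]
    _ = coeff (Finsupp.single i m + e) (X j ^ m * g) := by rw [hpow]
    _ = 0 := X_pow_dvd_iff.mp (dvd_mul_right _ g) _ (by simp [m, hij])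

theorem existsUnique_and_eq_mul_iff {M : Type*} [CommMonoid M] {u v : M} (hvu : v * u = 1)
    (P : M → Prop) (f : M) : (∃! h, P h ∧ f = u * h) ↔ P (v * f) := by
  have hsolve (h : M) : f = u * h ↔ h = v * f := by
    constructor
    · rintro rfl
      rw [← mul_assoc, hvu, one_mul]
    · rintro rfl
      rw [← mul_assoc, mul_comm u v, hvu, one_mul]
  simp only [hsolve]
  exact ⟨fun ⟨_, ⟨hP, rfl⟩, _⟩ => hP, fun hP => ⟨v * f, ⟨hP, rfl⟩, fun _ hh => hh.2⟩⟩

theorem stmt6_general {σ : Type*} [DecidableEq σ] {i j : σ} (hij : i ≠ j)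
    {p q : MvPowerSeries (Fin 2) k} (hp : p * q = 1) {f g : MvPowerSeries σ k}
    (hg : (X i - X j) * g =
      psSubst ![X i, X j] p * f - renamePS (Equiv.swap i j) (psSubst ![X i, X j] p * f)) :
    g = 0 ↔ ∃! h : MvPowerSeries σ k,
      renamePS (Equiv.swap i j) h = h ∧ f = psSubst ![X i, X j] q * h := by
  have hX : ∀ s, constantCoeff ((![X i, X j] : Fin 2 → MvPowerSeries σ k) s) = 0 := by
    simp [Fin.forall_fin_two]
  have hpq : psSubst ![(X i : MvPowerSeries σ k), X j] p * psSubst ![X i, X j] q = 1 := by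
    rw [← psSubst_mul hX, hp, psSubst_one hX]
  rw [existsUnique_and_eq_mul_iff hpq, ← (isRegular_X_sub_X hij).left.mul_left_eq_zero_iff, hg,
    sub_eq_zero, eq_comm]

theorem stmt6 (F : MvPowerSeries (Fin 2) k) (hF : IsFormalGroupLaw F)
    (ι : PowerSeries k) (hι0 : PowerSeries.constantCoeff ι = 0)
    (hι : psSubst ![PowerSeries.X, ι] F = 0)
    (q p : MvPowerSeries (Fin 2) k)
    (hq : formalDiff F ι = ((X 0 : MvPowerSeries (Fin 2) k) - X 1) * q)
    (hp : p * q = 1)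
    (n : ℕ) (hn : 2 ≤ n) (i j : Fin n) (hij : i < j)
    (f g : MvPowerSeries (Fin n) k)
    -- `g = A_α(f)`, the generalized divided difference of `f`
    (hg : ((X i : MvPowerSeries (Fin n) k) - X j) * g =
        psSubst ![(X i : MvPowerSeries (Fin n) k), X j] p * f -
          renamePS (Equiv.swap i j)
            (psSubst ![(X i : MvPowerSeries (Fin n) k), X j] p * f)) :
    -- `f` lies in the kernel of `A_α` iff `f = q(x_i,x_j)·h` for a unique `r_α`-invariant `h`
    g = 0 ↔ ∃! h : MvPowerSeries (Fin n) k,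
      renamePS (Equiv.swap i j) h = h ∧
      f = psSubst ![(X i : MvPowerSeries (Fin n) k), X j] q * h :=
  stmt6_general hij.ne hp hg
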